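/- ℘(ϖ/3) = 1 for the Weierstrass ℘-function with ℘'² = 4℘³ − 1 and real period ϖ; equivalently, ∫_1^∞ dx/√(4x³ − 1) = ϖ/3 = Γ(1/3)³/(6π). -/

import Mathlib

open Complex

noncomputable section

/-- `e^{πi/3}`. -/
def τ : ℂ := Complex.exp (Real.pi * Complex.I / 3)

/-- The point `mϖ + n e^{πi/3} ϖ` of the hexagonal lattice with real period `ϖ`. -/
def hexPt (ϖ : ℝ) (p : ℤ × ℤ) : ℂ := p.1 * ϖ + p.2 * τ * ϖ

/-- The hexagonal lattice `𝕋 = ℤϖ + ℤ e^{πi/3} ϖ`. -/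
def hexLattice (ϖ : ℝ) : Set ℂ := Set.range (hexPt ϖ)

/-- The real fundamental period `ϖ = Γ(1/3)³/(2π)`. -/
def ϖ₀ : ℝ := (Real.Gamma (1/3))^3 / (2 * Real.pi)

/-- The Weierstrass `℘`-function of the hexagonal lattice `𝕋 = ℤϖ₀ + ℤ e^{πi/3} ϖ₀`,
i.e. the `℘`-function with invariants `g₂ = 0`, `g₃ = 1`. -/
def wp (z : ℂ) : ℂ :=
  1 / z ^ 2 + ∑' p : {p : ℤ × ℤ // p ≠ 0}, (1 / (z - hexPt ϖ₀ p) ^ 2 - 1 / (hexPt ϖ₀ p) ^ 2)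

/-- The Weierstrass `σ`-function of the hexagonal lattice with real period `ϖ`. -/
def wSigma (ϖ : ℝ) (z : ℂ) : ℂ :=
  z * ∏' p : {p : ℤ × ℤ // p ≠ 0},
    ((1 - z / hexPt ϖ p) * Complex.exp (z / hexPt ϖ p + z ^ 2 / (2 * (hexPt ϖ p) ^ 2)))

/-- The Weierstrass `ζ`-function of the hexagonal lattice with real period `ϖ`. -/
def wZeta (ϖ : ℝ) (z : ℂ) : ℂ :=
  1 / z + ∑' p : {p : ℤ × ℤ // p ≠ 0},
    (1 / (z - hexPt ϖ p) + 1 / hexPt ϖ p + z / (hexPt ϖ p) ^ 2)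

open MeasureTheory Set in
lemma beta_real (a b : ℝ) (ha : 0 < a) (hb : 0 < b) :
    ∫ x in Ioo (0:ℝ) 1, x ^ (a - 1) * (1 - x) ^ (b - 1) =
      Real.Gamma a * Real.Gamma b / Real.Gamma (a + b) := by
  have h := ProbabilityTheory.beta_eq_betaIntegralReal a b ha hb
  rw [ProbabilityTheory.beta] at h
  rw [h, betaIntegral, intervalIntegral.integral_of_le zero_le_one,
    integral_Ioc_eq_integral_Ioo]
  have : ∫ x in Ioo (0:ℝ) 1, (x:ℂ) ^ ((a:ℂ) - 1) * (1 - (x:ℂ)) ^ ((b:ℂ) - 1)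
      = ∫ x in Ioo (0:ℝ) 1, ((x ^ (a - 1) * (1 - x) ^ (b - 1) : ℝ) : ℂ) := by
    refine setIntegral_congr_fun measurableSet_Ioo fun x hx => ?_
    have h1 : 0 ≤ x := hx.1.le
    have h2 : 0 ≤ 1 - x := by linarith [hx.2]
    push_cast [Complex.ofReal_cpow h1, Complex.ofReal_cpow h2]
    rfl
  rw [this]
  exact (congrArg Complex.re (integral_ofReal (𝕜 := ℂ)
    (f := fun x : ℝ => x ^ (a - 1) * (1 - x) ^ (b - 1)))).symm ▸ (Complex.ofReal_re _).symm

lemma sin_pi_third : Real.sin (Real.pi * (1/3)) = √3 / 2 := by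
  rw [show Real.pi * (1/3) = Real.pi / 3 by ring, Real.sin_pi_div_three]

lemma Gamma_two_thirds : Real.Gamma (2/3) = 2 * Real.pi / (√3 * Real.Gamma (1/3)) := by
  have h := Real.Gamma_mul_Gamma_one_sub (1/3)
  rw [sin_pi_third] at h
  norm_num at h
  have h1 : 0 < Real.Gamma (1/3) := Real.Gamma_pos_of_pos (by norm_num)
  have h3 : 0 < √(3:ℝ) := by positivity
  field_simp
  field_simp at h
  linarith

lemma Gamma_one_sixth : Real.Gamma (1/6) =
    (2:ℝ)^(2/3:ℝ) * √Real.pi * Real.Gamma (1/3) / Real.Gamma (2/3) := by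
  have h := Real.Gamma_mul_Gamma_add_half (1/6)
  norm_num at h
  have h1 : 0 < Real.Gamma (2/3) := Real.Gamma_pos_of_pos (by norm_num)
  rw [eq_div_iff h1.ne', h]
  ring_nf

open MeasureTheory Set in
lemma J_beta : ∫ y in Ioi (1:ℝ), 1 / √(y^3 - 1) =
    Real.Gamma (1/6) * Real.Gamma (1/2) / Real.Gamma (2/3) / 3 := by
  have himg : (fun y : ℝ => (y^3)⁻¹) '' Ioi 1 = Ioo 0 1 := by
    ext w
    constructor
    · rintro ⟨y, hy, rfl⟩
      have hy : 1 < y := hy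
      have : 1 < y^3 := one_lt_pow₀ hy (by norm_num)
      exact ⟨by positivity, inv_lt_one_of_one_lt₀ this⟩
    · rintro ⟨h0, h1⟩
      refine ⟨w ^ (-(1/3):ℝ), Real.one_lt_rpow_of_pos_of_lt_one_of_neg h0 h1 (by norm_num), ?_⟩
      simp only
      rw [← Real.rpow_natCast, ← Real.rpow_mul h0.le]
      norm_num [Real.rpow_neg_one]
  have hb := beta_real (1/6) (1/2) (by norm_num) (by norm_num)
  rw [← himg, integral_image_eq_integral_abs_deriv_smul (f' := fun y => -3 / y^4) measurableSet_Ioi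
    ?_ ?_] at hb
  · have : ∫ x in Ioi (1:ℝ), |(-3 / x^4 : ℝ)| • (((x^3)⁻¹) ^ ((1/6:ℝ) - 1) *
        (1 - (x^3)⁻¹) ^ ((1/2:ℝ) - 1)) = ∫ y in Ioi (1:ℝ), 3 * (1 / √(y^3 - 1)) := by
      refine setIntegral_congr_fun measurableSet_Ioi fun y hy => ?_
      have hy : 1 < y := hy
      have h0 : 0 < y := by linarith
      have h3 : 1 < y^3 := one_lt_pow₀ hy (by norm_num)
      have e1 : |(-3 / y^4 : ℝ)| = 3 * y ^ (-4:ℝ) := by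
        rw [abs_div, abs_of_pos (by positivity : 0 < y^4), Real.rpow_neg h0.le]
        norm_num
        rfl
      have e2 : ((y^3)⁻¹) ^ ((1/6:ℝ) - 1) = y ^ (5/2:ℝ) := by
        rw [← Real.rpow_natCast, ← Real.rpow_neg h0.le, ← Real.rpow_mul h0.le]
        norm_num
      have e3 : (1 - (y^3)⁻¹) ^ ((1/2:ℝ) - 1) = (1 / √(y^3 - 1)) * y ^ (3/2:ℝ) := by
        rw [show 1 - (y^3)⁻¹ = (y^3 - 1) / y^3 by field_simp,
          Real.div_rpow (by linarith) (by positivity), ← Real.rpow_natCast y 3,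
          ← Real.rpow_mul h0.le, Real.sqrt_eq_rpow, div_eq_mul_inv, ← Real.rpow_neg h0.le,
          one_div, one_div,
          ← Real.rpow_neg (x := y ^ ((3:ℕ):ℝ) - 1) (by rw [Real.rpow_natCast]; linarith)]
        norm_num
      simp only [smul_eq_mul]
      rw [e1, e2, e3]
      have e4 : y ^ (-4:ℝ) * y ^ (5/2:ℝ) * y ^ (3/2:ℝ) = 1 := by
        rw [← Real.rpow_add h0, ← Real.rpow_add h0]; norm_num
      linear_combination (3 * (1 / √(y^3 - 1))) * e4
    rw [this, integral_const_mul] at hb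
    norm_num at hb ⊢
    linarith
  · intro y hy
    have hy : 1 < y := hy
    have h0 : y ≠ 0 := by positivity
    have := ((hasDerivAt_pow 3 y).inv (by positivity)).hasDerivWithinAt (s := Ioi 1)
    refine HasDerivWithinAt.congr_deriv this ?_
    field_simp
    norm_num
    ring
  · intro x hx y hy h
    have hx : 1 < x := hx
    have hy : 1 < y := hy
    have := inv_injective h
    exact (pow_left_inj₀ (by linarith) (by linarith) (by norm_num)).1 this

open MeasureTheory Set in
lemma K_isog : ∫ x in Ioi (1:ℝ), 1 / √(4 * x^3 - 1) = ∫ x in Ioi (0:ℝ), 1 / √(4 * x^3 + 27) := by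
  have hinj : StrictMonoOn (fun y : ℝ => y - 1 / y^2) (Ioi 1) := by
    intro x hx y hy hxy
    have hx : 1 < x := hx
    have : 1 / y^2 < 1 / x^2 := by gcongr
    simp only; linarith
  have himg : (fun y : ℝ => y - 1 / y^2) '' Ioi 1 = Ioi 0 := by
    ext w
    constructor
    · rintro ⟨y, hy, rfl⟩
      have hy : 1 < y := hy
      have : 1 < y^3 := one_lt_pow₀ hy (by norm_num)
      have h2 : y - 1 / y^2 = (y^3 - 1) / y^2 := by field_simp
      simp only [mem_Ioi]; rw [h2]
      apply div_pos (by linarith) (by positivity)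
    · intro hw
      have hw : 0 < w := hw
      have hc : ContinuousOn (fun y : ℝ => y - 1 / y^2) (Icc 1 (w + 1)) := by
        apply ContinuousOn.sub continuousOn_id
        apply ContinuousOn.div continuousOn_const (by fun_prop)
        intro x hx; have := hx.1; positivity
      have h1 : 1 / (w+1)^2 < 1 := by
        rw [div_lt_one (by positivity)]; nlinarith
      obtain ⟨y, hy, he⟩ := intermediate_value_Icc (by linarith : (1:ℝ) ≤ w + 1) hc
        (show w ∈ Icc _ _ from ⟨by simpa using hw.le, by linarith⟩)
      refine ⟨y, lt_of_le_of_ne hy.1 ?_, he⟩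
      rintro rfl
      norm_num at he; linarith
  rw [← himg, integral_image_eq_integral_abs_deriv_smul (f' := fun y => 1 + 2 / y^3)
    measurableSet_Ioi ?_ hinj.injOn]
  · refine setIntegral_congr_fun measurableSet_Ioi fun y hy => ?_
    have hy : 1 < y := hy
    have h3 : 1 < y^3 := one_lt_pow₀ hy (by norm_num)
    have e : 4 * (y - 1 / y^2)^3 + 27 = (4 * y^3 - 1) * (1 + 2 / y^3)^2 := by
      field_simp; ring
    simp only [smul_eq_mul]
    rw [e, Real.sqrt_mul (by linarith), Real.sqrt_sq (by positivity), abs_of_pos (by positivity)]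
    have : 0 < √(4 * y^3 - 1) := Real.sqrt_pos.2 (by linarith)
    field_simp
  · intro y hy
    have hy : 1 < y := hy
    have := ((hasDerivAt_id y).sub ((hasDerivAt_const y (1:ℝ)).div (hasDerivAt_pow 2 y)
      (by positivity))).hasDerivWithinAt (s := Ioi 1)
    refine HasDerivWithinAt.congr_deriv this ?_
    field_simp
    norm_num
    ring

open MeasureTheory Set in
lemma K_beta : ∫ x in Ioi (0:ℝ), 1 / √(4 * x^3 + 27) =
    Real.Gamma (1/6) * Real.Gamma (1/3) / Real.Gamma (1/2) * (4:ℝ)^(2/3:ℝ) / (12 * √3) := by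
  have himg : (fun y : ℝ => 27 / (4 * y^3 + 27)) '' Ioi 0 = Ioo 0 1 := by
    ext w
    constructor
    · rintro ⟨y, hy, rfl⟩
      have hy : 0 < y := hy
      have : 0 < y^3 := by positivity
      refine ⟨by positivity, ?_⟩
      simp only
      rw [div_lt_one (by positivity)]; linarith
    · rintro ⟨h0, h1⟩
      have hp : 0 < 27 * (1 - w) / (4 * w) := by
        have : 0 < 1 - w := by linarith
        positivity
      refine ⟨(27 * (1 - w) / (4 * w)) ^ (1/3:ℝ), Real.rpow_pos_of_pos hp _, ?_⟩
      simp only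
      rw [← Real.rpow_natCast, ← Real.rpow_mul hp.le]
      norm_num
      field_simp
      ring
  have hb := beta_real (1/6) (1/3) (by norm_num) (by norm_num)
  rw [← himg, integral_image_eq_integral_abs_deriv_smul
    (f' := fun y => -(27 * (12 * y^2)) / (4 * y^3 + 27)^2) measurableSet_Ioi
    ?_ ?_] at hb
  · have : ∫ x in Ioi (0:ℝ), |(-(27 * (12 * x^2)) / (4 * x^3 + 27)^2 : ℝ)| •
        ((27 / (4 * x^3 + 27)) ^ ((1/6:ℝ) - 1) *
        (1 - 27 / (4 * x^3 + 27)) ^ ((1/3:ℝ) - 1)) =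
        ∫ y in Ioi (0:ℝ), (12 * √3 / (4:ℝ)^(2/3:ℝ)) * (1 / √(4 * y^3 + 27)) := by
      refine setIntegral_congr_fun measurableSet_Ioi fun y hy => ?_
      have h0 : 0 < y := hy
      have h3 : 0 < y^3 := by positivity
      set A : ℝ := 4 * y^3 + 27 with hA
      have hA0 : 0 < A := by positivity
      have e1 : |(-(27 * (12 * y^2)) / A^2 : ℝ)| = 27 * 12 * y^2 * A ^ (-2:ℝ) := by
        rw [neg_div, abs_neg, abs_of_pos (by positivity), Real.rpow_neg hA0.le]
        norm_num
        ring
      have e2 : (27 / A) ^ ((1/6:ℝ) - 1) = √3 / 27 * 3 ^ 1 * A ^ (5/6:ℝ) / 3 := by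
        rw [Real.div_rpow (by norm_num) hA0.le, div_eq_mul_inv, ← Real.rpow_neg hA0.le]
        have : (27:ℝ) ^ ((1/6:ℝ) - 1) = √3 / 27 := by
          rw [Real.rpow_sub (by norm_num), Real.rpow_one, show (27:ℝ) = 3 ^ (3:ℝ) by norm_num,
            ← Real.rpow_mul (by norm_num), Real.sqrt_eq_rpow]
          norm_num
        rw [this]; norm_num; ring
      have e3 : (1 - 27 / A) ^ ((1/3:ℝ) - 1) = 1 / (4:ℝ)^(2/3:ℝ) / y^2 * A ^ (2/3:ℝ) := by
        rw [show 1 - 27 / A = 4 * y^3 / A by rw [hA]; field_simp; ring,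
          Real.div_rpow (by positivity) hA0.le, div_eq_mul_inv, ← Real.rpow_neg hA0.le,
          Real.mul_rpow (by norm_num) h3.le]
        have : (y^3) ^ ((1/3:ℝ) - 1) = 1 / y^2 := by
          rw [← Real.rpow_natCast, ← Real.rpow_mul h0.le]
          norm_num [Real.rpow_neg h0.le]
        have h4 : (4:ℝ) ^ ((1/3:ℝ) - 1) = 1 / 4 ^ (2/3:ℝ) := by
          rw [one_div ((4:ℝ) ^ (2/3:ℝ)), ← Real.rpow_neg (by norm_num)]; norm_num
        rw [this, h4, show -((1/3:ℝ) - 1) = 2/3 by norm_num]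
        ring
      have e5 : 1 / √A = A ^ (-2:ℝ) * A ^ (5/6:ℝ) * A ^ (2/3:ℝ) := by
        rw [← Real.rpow_add hA0, ← Real.rpow_add hA0, Real.sqrt_eq_rpow, one_div,
          ← Real.rpow_neg hA0.le]; norm_num
      simp only [smul_eq_mul]
      rw [e5, e1, e2, e3]
      field_simp
    rw [this, integral_const_mul] at hb
    have h4 : (0:ℝ) < 4 ^ (2/3:ℝ) := by positivity
    rw [show (1/6 + 1/3 : ℝ) = 1/2 by norm_num] at hb
    rw [← hb]
    field_simp
  · intro y hy
    have hy : 0 < y := hy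
    have := (((((hasDerivAt_pow 3 y).const_mul 4).add_const 27).inv
      (by positivity)).const_mul 27).hasDerivWithinAt (s := Ioi 0)
    refine HasDerivWithinAt.congr_deriv this ?_
    field_simp
    norm_num
    ring
  · intro x hx y hy h
    have hx : 0 < x := hx
    have hy : 0 < y := hy
    have h1 : 4 * x^3 + 27 = 4 * y^3 + 27 := by
      simp only at h
      field_simp at h
      linarith
    have : x^3 = y^3 := by linarith
    exact (pow_left_inj₀ (by linarith) (by linarith) (by norm_num)).1 this

lemma K_val : ∫ x in Set.Ioi (1:ℝ), 1 / √(4 * x^3 - 1) = ϖ₀ / 3 := by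
  have h1 : 0 < Real.Gamma (1/3) := Real.Gamma_pos_of_pos (by norm_num)
  have h4 : (4:ℝ)^(2/3:ℝ) = 2^(2/3:ℝ) * 2^(2/3:ℝ) := by
    rw [← Real.mul_rpow] <;> norm_num
  have h5 : (2:ℝ)^(2/3:ℝ) * 2^(2/3:ℝ) * 2^(2/3:ℝ) = 4 := by
    rw [← Real.rpow_add (by norm_num), ← Real.rpow_add (by norm_num)]; norm_num
  have hpi := Real.pi_pos
  rw [K_isog, K_beta, Gamma_one_sixth, Gamma_two_thirds, Real.Gamma_one_half_eq, ϖ₀, h4]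
  field_simp
  linear_combination 3 * h5

lemma ϖ₀_pos : 0 < ϖ₀ := by
  have h1 : 0 < Real.Gamma (1/3) := Real.Gamma_pos_of_pos (by norm_num)
  have hpi := Real.pi_pos
  rw [ϖ₀]; positivity

/-- `J⁶ = ϖ⁶ / 4`. -/
lemma J_val : ∫ y in Set.Ioi (1:ℝ), 1 / √(y^3 - 1) = ϖ₀ * 2^(2/3:ℝ) / 2 := by
  have h1 : 0 < Real.Gamma (1/3) := Real.Gamma_pos_of_pos (by norm_num)
  have hpi := Real.pi_pos
  rw [J_beta, Gamma_one_sixth, Gamma_two_thirds, Real.Gamma_one_half_eq, ϖ₀]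
  have h3 : √(3:ℝ)^2 = 3 := Real.sq_sqrt (by norm_num)
  have h4 : √(Real.pi)^2 = Real.pi := Real.sq_sqrt hpi.le
  field_simp
  rw [h3, h4]
  ring

lemma τ_eq : τ = 1 / 2 + (√3 / 2 : ℝ) * I := by
  have : τ = Complex.exp (((Real.pi / 3 : ℝ) : ℂ) * I) := by
    rw [τ]; congr 1; push_cast; ring
  rw [this, Complex.exp_mul_I, ← Complex.ofReal_cos, ← Complex.ofReal_sin, Real.cos_pi_div_three,
    Real.sin_pi_div_three]
  push_cast; ring

lemma τ_re : τ.re = 1 / 2 := by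
  rw [τ_eq]
  simp

lemma τ_im : τ.im = √3 / 2 := by rw [τ_eq]; simp

lemma τ_sq : τ ^ 2 = τ - 1 := by
  have h3 : ((√3 : ℝ) : ℂ)^2 = 3 := by norm_cast; exact Real.sq_sqrt (by norm_num)
  rw [τ_eq]; push_cast
  linear_combination (1/4 : ℂ) * I^2 * h3 + (3/4:ℂ) * Complex.I_sq

lemma τ_conj : (starRingEnd ℂ) τ = 1 - τ := by
  apply Complex.ext
  · simp [τ_re]; norm_num
  · simp [τ_im]

/-- The hexagonal period pair. -/
def LH : PeriodPair where
  ω₁ := ϖ₀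
  ω₂ := τ * ϖ₀
  indep := by
    rw [LinearIndependent.pair_iff]
    intro s t h
    have hp := ϖ₀_pos
    have h3 : 0 < √(3:ℝ) := by positivity
    have him := congrArg Complex.im h
    have hre := congrArg Complex.re h
    simp [τ_re, τ_im] at him hre
    have ht : t = 0 := him.resolve_right hp.ne'
    subst ht
    simp at hre
    exact ⟨hre.resolve_right hp.ne', rfl⟩

lemma LH_mem {z : ℂ} : z ∈ LH.lattice ↔ ∃ m n : ℤ, (m : ℂ) * ϖ₀ + n * (τ * ϖ₀) = z :=
  PeriodPair.mem_lattice

/-- Imaginary parts of lattice points. -/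
lemma LH_im {z : ℂ} (hz : z ∈ LH.lattice) : ∃ n : ℤ, z.im = n * (√3 / 2 * ϖ₀) := by
  obtain ⟨m, n, rfl⟩ := LH_mem.1 hz
  exact ⟨n, by simp [τ_im]⟩

/-- Real lattice points. -/
lemma LH_real {t : ℝ} (h0 : 0 < t) (h1 : t < ϖ₀) : (t : ℂ) ∉ LH.lattice := by
  intro hz
  obtain ⟨m, n, h⟩ := LH_mem.1 hz
  have hp := ϖ₀_pos
  have h3 : 0 < √(3:ℝ) := by positivity
  have him := congrArg Complex.im h
  have hre := congrArg Complex.re h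
  simp [τ_re, τ_im] at him hre
  have hn : n = 0 := him.resolve_right hp.ne'
  subst hn
  simp at hre
  have a : (0:ℝ) < m := by by_contra hc; push Not at hc; nlinarith
  have b : (m:ℝ) < 1 := by by_contra hc; push Not at hc; nlinarith
  norm_cast at a b
  lia

lemma LH_notMem_im {z : ℂ} (h0 : 0 < z.im) (h1 : z.im < √3 / 2 * ϖ₀) : z ∉ LH.lattice := by
  intro hz
  obtain ⟨n, hn⟩ := LH_im hz
  have hp := ϖ₀_pos
  have hc : 0 < √3 / 2 * ϖ₀ := by positivity
  have a : (0:ℝ) < n := by by_contra hc; push Not at hc; nlinarith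
  have b : (n:ℝ) < 1 := by by_contra hc; push Not at hc; nlinarith
  norm_cast at a b
  lia

lemma wp_eq (z : ℂ) : wp z = LH.weierstrassP z := by
  rw [PeriodPair.weierstrassP, wp]
  have hs := (LH.hasSum_weierstrassP z).summable
  rw [← LH.latticeEquivProd.symm.toEquiv.tsum_eq]
  have hs' := (LH.latticeEquivProd.symm.toEquiv.summable_iff).2 hs
  have e : ∀ p : ℤ × ℤ, ((LH.latticeEquivProd.symm p : LH.lattice) : ℂ) = hexPt ϖ₀ p := by
    intro p
    rw [LH.latticeEquiv_symm_apply, hexPt]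
    simp only [LH]; ring
  have := hs'.tsum_subtype_add_tsum_subtype_compl {p : ℤ × ℤ | p ≠ 0}
  refine Eq.trans ?_ this
  rw [add_comm]
  congr 1
  · refine tsum_congr fun p => ?_
    simp only [Function.comp, LinearEquiv.coe_toEquiv]
    rw [e]
  · have : {p : ℤ × ℤ | p ≠ 0}ᶜ = {0} := by ext; simp
    rw [this, tsum_singleton 0 (f := _)]
    simp

lemma τ_mul_mem {z : ℂ} (hz : z ∈ LH.lattice) : τ * z ∈ LH.lattice := by
  obtain ⟨m, n, rfl⟩ := LH_mem.1 hz
  refine LH_mem.2 ⟨-n, m + n, ?_⟩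
  push_cast
  linear_combination -(n : ℂ) * ϖ₀ * τ_sq

lemma τ_cube : τ ^ 3 = -1 := by
  linear_combination (τ + 1) * τ_sq

lemma τ_ne : τ ≠ 0 := by
  intro h
  have := τ_cube
  rw [h] at this; norm_num at this

/-- Rotation of the lattice by `τ`. -/
def rot : LH.lattice ≃ LH.lattice where
  toFun l := ⟨τ * l, τ_mul_mem l.2⟩
  invFun l := ⟨-(τ * (τ * l)), neg_mem (τ_mul_mem (τ_mul_mem l.2))⟩
  left_inv l := by
    ext; simp only
    linear_combination -(l : ℂ) * τ_cube
  right_inv l := by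
    ext; simp only
    linear_combination -(l : ℂ) * τ_cube

lemma wp_rot (z : ℂ) : LH.weierstrassP (τ * z) = (τ^2)⁻¹ * LH.weierstrassP z := by
  rw [PeriodPair.weierstrassP, PeriodPair.weierstrassP, ← rot.tsum_eq, ← tsum_mul_left]
  refine tsum_congr fun l => ?_
  simp only [rot, Equiv.coe_fn_mk]
  rw [← mul_sub, mul_pow, mul_pow]
  simp only [one_div, mul_inv]
  ring

lemma wp'_rot (z : ℂ) : LH.derivWeierstrassP (τ * z) = -LH.derivWeierstrassP z := by
  rw [PeriodPair.derivWeierstrassP, PeriodPair.derivWeierstrassP, ← rot.tsum_eq, ← tsum_neg,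
    ← tsum_neg, ← tsum_neg]
  refine tsum_congr fun l => ?_
  simp only [rot, Equiv.coe_fn_mk]
  rw [← mul_sub, mul_pow, τ_cube]
  simp [div_neg]

lemma g₂_zero : LH.g₂ = 0 := by
  have h : LH.G 4 = (τ^4)⁻¹ * LH.G 4 := by
    conv_lhs => rw [PeriodPair.G, ← rot.tsum_eq]
    rw [PeriodPair.G, ← tsum_mul_left]
    refine tsum_congr fun l => ?_
    simp only [rot, Equiv.coe_fn_mk]
    rw [mul_pow, mul_inv]
  have h2 : τ^4 * LH.G 4 = LH.G 4 := by
    conv_lhs => rw [h]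
    rw [← mul_assoc, mul_inv_cancel₀ (pow_ne_zero _ τ_ne), one_mul]
  have h3 : (τ + 1) * LH.G 4 = 0 := by
    linear_combination -h2 + τ * LH.G 4 * τ_cube
  have h4 : τ + 1 ≠ 0 := by
    intro h; have := congrArg Complex.re h; simp [τ_re] at this; norm_num at this
  rw [PeriodPair.g₂, (mul_eq_zero.1 h3).resolve_left h4, mul_zero]

lemma conj_mem {z : ℂ} (hz : z ∈ LH.lattice) : (starRingEnd ℂ) z ∈ LH.lattice := by
  obtain ⟨m, n, rfl⟩ := LH_mem.1 hz
  refine LH_mem.2 ⟨m + n, -n, ?_⟩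
  simp only [map_add, map_mul, τ_conj, map_intCast, Complex.conj_ofReal]
  push_cast
  ring

/-- Conjugation of the lattice. -/
def cj : LH.lattice ≃ LH.lattice where
  toFun l := ⟨(starRingEnd ℂ) l, conj_mem l.2⟩
  invFun l := ⟨(starRingEnd ℂ) l, conj_mem l.2⟩
  left_inv l := by ext; simp
  right_inv l := by ext; simp

lemma wp_conj (z : ℂ) : LH.weierstrassP ((starRingEnd ℂ) z) =
    (starRingEnd ℂ) (LH.weierstrassP z) := by
  rw [PeriodPair.weierstrassP, PeriodPair.weierstrassP, ← cj.tsum_eq, Complex.conj_tsum]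
  refine tsum_congr fun l => ?_
  simp [cj]

lemma wp'_conj (z : ℂ) : LH.derivWeierstrassP ((starRingEnd ℂ) z) =
    (starRingEnd ℂ) (LH.derivWeierstrassP z) := by
  rw [PeriodPair.derivWeierstrassP, PeriodPair.derivWeierstrassP, ← cj.tsum_eq, map_neg,
    Complex.conj_tsum]
  congr 1
  refine tsum_congr fun l => ?_
  have h2 : (starRingEnd ℂ) (2:ℂ) = 2 := map_ofNat _ 2
  simp [cj, h2]

lemma g₃_conj : (starRingEnd ℂ) LH.g₃ = LH.g₃ := by
  rw [PeriodPair.g₃, PeriodPair.G, map_mul, Complex.conj_tsum]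
  conv_rhs => rw [← cj.tsum_eq]
  congr 1
  · exact map_ofNat _ 140
  · refine tsum_congr fun l => ?_
    simp [cj]

lemma ode (z : ℂ) (hz : z ∉ LH.lattice) :
    LH.derivWeierstrassP z ^ 2 = 4 * LH.weierstrassP z ^ 3 - LH.g₃ := by
  rw [LH.derivWeierstrassP_sq z hz, g₂_zero]; ring

lemma wp_hasDeriv (z : ℂ) (hz : z ∉ LH.lattice) :
    HasDerivAt LH.weierstrassP (LH.derivWeierstrassP z) z := by
  rw [← LH.deriv_weierstrassP]
  exact (LH.analyticOnNhd_weierstrassP z hz).differentiableAt.hasDerivAt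

open Filter Topology in
lemma wp_pole : Tendsto (fun z => z^2 * LH.weierstrassP z) (𝓝[≠] 0) (𝓝 1) := by
  have h0 : (0:ℂ) ∈ LH.lattice := zero_mem _
  have hc : ContinuousAt (fun z : ℂ => z^2 * LH.weierstrassPExcept 0 z + 1) 0 := by
    have := (LH.analyticAt_weierstrassPExcept 0).continuousAt
    fun_prop
  have h1 := hc.tendsto
  simp only [ne_eq, OfNat.ofNat_ne_zero, not_false_eq_true, zero_pow, zero_mul, zero_add] at h1
  refine (h1.mono_left nhdsWithin_le_nhds).congr' ?_
  filter_upwards [self_mem_nhdsWithin] with z hz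
  have hz : z ≠ 0 := hz
  have := LH.ite_eq_one_sub_sq_mul_weierstrassP 0 h0 z
  rw [if_neg hz] at this
  simp at this
  exact this.symm

lemma wp'_not_zero : ¬ Set.EqOn LH.derivWeierstrassP 0 (LH.lattice : Set ℂ)ᶜ := by
  intro h
  have h0 := LH.ω₁_div_two_notMem_lattice
  have hp := ϖ₀_pos
  -- the function z^2 ℘ would then have ℘ locally constant on reals; use the interval (0, ϖ)
  have hconst : ∀ x ∈ Set.Ioo (0:ℝ) ϖ₀, LH.weierstrassP (x:ℂ) = LH.weierstrassP ((ϖ₀/2:ℝ):ℂ) := by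
    intro x hx
    have hd : ∀ t ∈ Set.Ioo (0:ℝ) ϖ₀, HasDerivAt (fun t : ℝ => LH.weierstrassP (t:ℂ)) 0 t := by
      intro t ht
      have h1 := LH_real ht.1 ht.2
      have := (wp_hasDeriv t h1).comp_ofReal
      rw [h h1] at this
      exact this
    refine (convex_Ioo (0:ℝ) ϖ₀).is_const_of_fderivWithin_eq_zero (𝕜 := ℝ) (f := fun t : ℝ => LH.weierstrassP (t:ℂ)) (x := x) (y := ϖ₀/2) ?_ ?_ hx ⟨by linarith, by linarith⟩
    · intro t ht; exact (hd t ht).differentiableAt.differentiableWithinAt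
    · intro t ht
      rw [fderivWithin_of_isOpen isOpen_Ioo ht]
      have := (hd t ht).hasFDerivAt.fderiv
      rw [this]; ext; simp
  have hmap : Filter.Tendsto (fun t : ℝ => (t:ℂ)) (nhdsWithin 0 (Set.Ioi 0)) (nhdsWithin 0 {0}ᶜ) := by
    refine tendsto_nhdsWithin_of_tendsto_nhds_of_eventually_within _ ?_ ?_
    · have := (Complex.continuous_ofReal.tendsto 0)
      simp only [Complex.ofReal_zero] at this
      exact this.mono_left nhdsWithin_le_nhds
    · filter_upwards [self_mem_nhdsWithin] with t ht
      have : 0 < t := ht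
      simpa using this.ne'
  have hl := wp_pole.comp hmap
  have hr : Filter.Tendsto (fun t : ℝ => (t:ℂ)^2 * LH.weierstrassP ((ϖ₀/2:ℝ):ℂ)) (nhdsWithin 0 (Set.Ioi 0)) (nhds 0) := by
    have : Continuous (fun t : ℝ => (t:ℂ)^2 * LH.weierstrassP ((ϖ₀/2:ℝ):ℂ)) := by fun_prop
    have := this.tendsto 0
    simp only [Complex.ofReal_zero, ne_eq, OfNat.ofNat_ne_zero, not_false_eq_true, zero_pow,
      zero_mul] at this
    exact this.mono_left nhdsWithin_le_nhds
  have := tendsto_nhds_unique_of_eventuallyEq hl hr (by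
    filter_upwards [Ioo_mem_nhdsGT hp] with t ht
    simp only [Function.comp]; rw [hconst t ht])
  norm_num at this

lemma wp'_hasDeriv (z : ℂ) (hz : z ∉ LH.lattice) :
    HasDerivAt LH.derivWeierstrassP (6 * LH.weierstrassP z ^ 2) z := by
  set U : Set ℂ := (LH.lattice : Set ℂ)ᶜ with hU
  have hUo : IsOpen U := LH.isClosed_lattice.isOpen_compl
  have hUc : IsPreconnected U := by
    apply IsConnected.isPreconnected
    apply Set.Countable.isConnected_compl_of_one_lt_rank
    · rw [Complex.rank_real_complex]; norm_num
    · have : Countable LH.lattice := LH.latticeEquivProd.toEquiv.countable_iff.2 inferInstance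
      exact Set.countable_coe_iff.1 this
  have ha := LH.analyticOnNhd_derivWeierstrassP
  have hb : AnalyticOnNhd ℂ (fun z => deriv LH.derivWeierstrassP z - 6 * LH.weierstrassP z ^ 2) U := by
    intro w hw
    have h1 := (ha w hw).deriv
    have h2 := LH.analyticOnNhd_weierstrassP w hw
    fun_prop
  have hz0 : ∀ w ∈ U, LH.derivWeierstrassP w *
      (deriv LH.derivWeierstrassP w - 6 * LH.weierstrassP w ^ 2) = 0 := by
    intro w hw
    have h1 := (ha w hw).differentiableAt.hasDerivAt
    have h2 := wp_hasDeriv w hw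
    have h3 := h1.pow 2
    have h4 := ((h2.pow 3).const_mul 4).sub_const LH.g₃
    have h5 : (fun w => LH.derivWeierstrassP w ^ 2) =ᶠ[nhds w]
        fun w => 4 * LH.weierstrassP w ^ 3 - LH.g₃ := by
      filter_upwards [hUo.mem_nhds hw] with v hv
      exact ode v hv
    have h6 := h3.unique (h4.congr_of_eventuallyEq h5)
    push_cast at h6
    linear_combination (1/2:ℂ) * h6
  have := AnalyticOnNhd.eq_zero_or_eq_zero_of_mul_eq_zero ha hb hz0 hUc
  rcases this with h | h
  · exact absurd (fun w hw => h w hw) wp'_not_zero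
  · have h1 := (ha z hz).differentiableAt.hasDerivAt
    have := h z hz
    rw [sub_eq_zero] at this
    rwa [this] at h1

lemma tendsto_wp_norm : Filter.Tendsto (fun t : ℝ => (LH.weierstrassP (t:ℂ)).re)
    (nhdsWithin 0 (Set.Ioi 0)) Filter.atTop := by
  have hmap : Filter.Tendsto (fun t : ℝ => (t:ℂ)) (nhdsWithin 0 (Set.Ioi 0))
      (nhdsWithin 0 {0}ᶜ) := by
    refine tendsto_nhdsWithin_of_tendsto_nhds_of_eventually_within _ ?_ ?_
    · have := (Complex.continuous_ofReal.tendsto 0)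
      simp only [Complex.ofReal_zero] at this
      exact this.mono_left nhdsWithin_le_nhds
    · filter_upwards [self_mem_nhdsWithin] with t ht
      have : 0 < t := ht
      simpa using this.ne'
  have h1 := (Complex.continuous_re.tendsto 1).comp (wp_pole.comp hmap)
  have h2 : Filter.Tendsto (fun t : ℝ => (t^2)⁻¹) (nhdsWithin 0 (Set.Ioi 0)) Filter.atTop := by
    apply Filter.Tendsto.inv_tendsto_nhdsGT_zero
    refine tendsto_nhdsWithin_of_tendsto_nhds_of_eventually_within _ ?_ ?_
    · have : Continuous (fun t : ℝ => t^2) := by fun_prop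
      have := this.tendsto 0
      simp only [ne_eq, OfNat.ofNat_ne_zero, not_false_eq_true, zero_pow] at this
      exact this.mono_left nhdsWithin_le_nhds
    · filter_upwards [self_mem_nhdsWithin] with t ht
      have : 0 < t := ht
      exact (by positivity : 0 < t^2)
  have h3 := h2.atTop_mul_pos (by simp : (0:ℝ) < (1:ℂ).re) h1
  refine h3.congr' ?_
  filter_upwards [self_mem_nhdsWithin] with t ht
  have : 0 < t := ht
  simp only [Function.comp]
  rw [← Complex.ofReal_pow, Complex.re_ofReal_mul]
  field_simp

lemma wp_ne_zero (r : ℝ) (h0 : 0 < r) (h1 : r < ϖ₀) : LH.weierstrassP (r:ℂ) ≠ 0 := by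
  intro hr
  set b : ℂ := τ * (τ * r) with hb
  have hbw : LH.weierstrassP b = 0 := by rw [hb, wp_rot, wp_rot, hr]; simp
  have hbw' : LH.derivWeierstrassP b = LH.derivWeierstrassP r := by
    rw [hb, wp'_rot, wp'_rot, neg_neg]
  have hbim : b.im = √3 / 2 * r := by
    have : b = (τ - 1) * r := by rw [hb]; linear_combination (r:ℂ) * τ_sq
    rw [this]; simp [τ_im]
  have h3 : 0 < √(3:ℝ) := by positivity
  have hbn : ∀ t : ℝ, b - t ∉ LH.lattice := by
    intro t
    apply LH_notMem_im
    · simp only [sub_im, ofReal_im, sub_zero, hbim]; positivity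
    · simp only [sub_im, ofReal_im, sub_zero, hbim]; gcongr
  have hrn : ∀ t : ℝ, 0 ≤ t → t < r → (r:ℂ) - t ∉ LH.lattice := by
    intro t ht ht'
    have := LH_real (t := r - t) (by linarith) (by linarith)
    simpa using this
  have hsub : ∀ (c : ℂ) (t : ℝ), HasDerivAt (fun t : ℝ => c - (t:ℂ)) (-1) t := by
    intro c t
    have := (Complex.ofRealCLM.hasDerivAt (x := t)).const_sub c
    simpa using this
  have hd1 : ∀ (c : ℂ) (t : ℝ), c - t ∉ LH.lattice →
      HasDerivAt (fun t : ℝ => LH.weierstrassP (c - t)) (-LH.derivWeierstrassP (c - t)) t := by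
    intro c t h
    have := (wp_hasDeriv _ h).comp t (hsub c t)
    simpa [Function.comp_def] using this
  have hd2 : ∀ (c : ℂ) (t : ℝ), c - t ∉ LH.lattice →
      HasDerivAt (fun t : ℝ => LH.derivWeierstrassP (c - t))
        (-(6 * LH.weierstrassP (c - t)^2)) t := by
    intro c t h
    have := (wp'_hasDeriv _ h).comp t (hsub c t)
    simpa [Function.comp_def] using this
  have key : ∀ T : ℝ, 0 ≤ T → T < r → LH.weierstrassP (r - T) = LH.weierstrassP (b - T) := by
    intro T hT hTr
    let f : ℝ → ℂ × ℂ := fun t => (LH.weierstrassP (r - t) - LH.weierstrassP (b - t),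
      LH.derivWeierstrassP (b - t) - LH.derivWeierstrassP (r - t))
    let f' : ℝ → ℂ × ℂ := fun t =>
      (-LH.derivWeierstrassP (r - t) - -LH.derivWeierstrassP (b - t),
      -(6 * LH.weierstrassP (b - t)^2) - -(6 * LH.weierstrassP (r - t)^2))
    have hf : ∀ t ∈ Set.Icc 0 T, HasDerivAt f (f' t) t := by
      intro t ht
      have a1 := hrn t ht.1 (by linarith [ht.2])
      have a2 := hbn t
      exact ((hd1 r t a1).sub (hd1 b t a2)).prodMk ((hd2 b t a2).sub (hd2 r t a1))
    have hcont : ContinuousOn (fun t : ℝ => LH.weierstrassP (r - t) + LH.weierstrassP (b - t))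
        (Set.Icc 0 T) := by
      intro t ht
      have a1 := hrn t ht.1 (by linarith [ht.2])
      have a2 := hbn t
      exact ((hd1 r t a1).add (hd1 b t a2)).continuousAt.continuousWithinAt
    obtain ⟨M, hM⟩ := isCompact_Icc.exists_bound_of_continuousOn hcont
    have := eq_zero_of_abs_deriv_le_mul_abs_self_of_eq_zero_right (f := f) (f' := f')
      (K := max 1 (6 * M)) (a := 0) (b := T)
      (fun t ht => (hf t ht).continuousAt.continuousWithinAt)
      (fun t ht => (hf t (Set.Ico_subset_Icc_self ht)).hasDerivWithinAt)
      (by simp [f, hr, hbw, hbw']) ?_ T ⟨hT, le_rfl⟩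
    · have := congrArg Prod.fst this
      simpa [f, sub_eq_zero] using this
    · intro t ht
      have hMt := hM t (Set.Ico_subset_Icc_self ht)
      have e1 : (f' t).1 = (f t).2 := by simp only [f, f']; ring
      have e2 : (f' t).2 = 6 * (LH.weierstrassP (r - t) + LH.weierstrassP (b - t)) * (f t).1 := by
        simp only [f, f']; ring
      rw [Prod.norm_def (f' t), e1, e2]
      apply max_le
      · calc ‖(f t).2‖ ≤ ‖f t‖ := norm_snd_le _
          _ = 1 * ‖f t‖ := (one_mul _).symm
          _ ≤ _ := by gcongr; exact le_max_left _ _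
      · rw [norm_mul, norm_mul]
        have : ‖(6:ℂ)‖ = 6 := by simp
        rw [this]
        gcongr
        · exact le_trans (by gcongr) (le_max_right _ _)
        · exact norm_fst_le _
  -- let `T → r`
  have hl : Filter.Tendsto (fun t : ℝ => (LH.weierstrassP (b - ((r - t : ℝ) : ℂ))).re)
      (nhdsWithin 0 (Set.Ioi 0)) (nhds (LH.weierstrassP (b - r)).re) := by
    have hc : ContinuousAt (fun t : ℝ => (LH.weierstrassP (b - ((r - t : ℝ) : ℂ))).re) 0 := by
      have c1 := (hd1 b r (hbn r)).continuousAt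
      have c2 : ContinuousAt (fun t : ℝ => LH.weierstrassP (b - ((r - t : ℝ) : ℂ))) 0 := by
        refine ContinuousAt.comp (f := fun t : ℝ => r - t)
          (g := fun t : ℝ => LH.weierstrassP (b - t)) ?_ (by fun_prop)
        simpa using c1
      exact Complex.continuous_re.continuousAt.comp c2
    have := hc.tendsto
    simp only [sub_zero] at this
    exact this.mono_left nhdsWithin_le_nhds
  refine not_tendsto_nhds_of_tendsto_atTop tendsto_wp_norm _ (hl.congr' ?_)
  filter_upwards [Ioo_mem_nhdsGT h0] with t ht
  rw [← key (r - t) (by linarith [ht.2]) (by linarith [ht.1])]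
  push_cast
  congr 2
  ring

/-- `℘` on the real line. -/
def pR (t : ℝ) : ℝ := (LH.weierstrassP (t:ℂ)).re

/-- Derivative of the Weierstrass function on the real line. -/
def pR' (t : ℝ) : ℝ := (LH.derivWeierstrassP (t:ℂ)).re

/-- `g₃` as a real number. -/
def gR : ℝ := LH.g₃.re

lemma pR_eq (t : ℝ) : LH.weierstrassP (t:ℂ) = pR t := by
  have := wp_conj t
  rw [Complex.conj_ofReal] at this
  exact (Complex.conj_eq_iff_re.1 this.symm).symm

lemma pR'_eq (t : ℝ) : LH.derivWeierstrassP (t:ℂ) = pR' t := by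
  have := wp'_conj t
  rw [Complex.conj_ofReal] at this
  exact (Complex.conj_eq_iff_re.1 this.symm).symm

lemma gR_eq : LH.g₃ = gR := (Complex.conj_eq_iff_re.1 g₃_conj).symm

lemma pR_ode {t : ℝ} (h0 : 0 < t) (h1 : t < ϖ₀) : pR' t ^ 2 = 4 * pR t ^ 3 - gR := by
  have := ode t (LH_real h0 h1)
  rw [pR_eq, pR'_eq, gR_eq] at this
  exact_mod_cast this

lemma pR_deriv {t : ℝ} (h0 : 0 < t) (h1 : t < ϖ₀) : HasDerivAt pR (pR' t) t :=
  (wp_hasDeriv t (LH_real h0 h1)).real_of_complex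

lemma pR'_deriv {t : ℝ} (h0 : 0 < t) (h1 : t < ϖ₀) : HasDerivAt pR' (6 * pR t ^ 2) t := by
  have := (wp'_hasDeriv t (LH_real h0 h1)).real_of_complex
  rw [pR_eq] at this
  norm_cast at this

lemma pR'_half : pR' (ϖ₀ / 2) = 0 := by
  have h1 := LH.derivWeierstrassP_neg ((ϖ₀ / 2 : ℝ) : ℂ)
  have h2 := LH.derivWeierstrassP_add_coe (-((ϖ₀ / 2 : ℝ) : ℂ)) ⟨_, LH.ω₁_mem_lattice⟩
  have h3 : -((ϖ₀ / 2 : ℝ) : ℂ) + LH.ω₁ = ((ϖ₀ / 2 : ℝ) : ℂ) := by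
    simp only [LH]; push_cast; ring
  simp only [h3] at h2
  rw [h1, pR'_eq] at h2
  norm_cast at h2
  linarith

lemma pR_ne {t : ℝ} (h0 : 0 < t) (h1 : t < ϖ₀) : pR t ≠ 0 := by
  intro h
  apply wp_ne_zero t h0 h1
  rw [pR_eq, h]; simp

/-- Every value above `p z` is taken on `(0, z)`. -/
lemma pR_surj {z x : ℝ} (h0 : 0 < z) (h1 : z < ϖ₀) (hx : pR z < x) :
    ∃ t ∈ Set.Ioo 0 z, pR t = x := by
  obtain ⟨s, hs, hsx⟩ := ((tendsto_wp_norm.eventually_gt_atTop x).and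
    (Ioo_mem_nhdsGT h0)).exists
  have hs : x < pR s := hs
  have hc : ContinuousOn pR (Set.Icc s z) := fun t ht =>
    (pR_deriv (by linarith [ht.1, hsx.1]) (by linarith [ht.2])).continuousAt.continuousWithinAt
  obtain ⟨t, ht, he⟩ := intermediate_value_Icc' hsx.2.le hc
    (show x ∈ Set.Icc _ _ from ⟨hx.le, hs.le⟩)
  refine ⟨t, ⟨by linarith [ht.1, hsx.1], lt_of_le_of_ne ht.2 ?_⟩, he⟩
  rintro rfl
  linarith

lemma pR_pos {t : ℝ} (h0 : 0 < t) (h1 : t < ϖ₀) : 0 < pR t := by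
  by_contra h
  push Not at h
  have h' := lt_of_le_of_ne h (pR_ne h0 h1)
  obtain ⟨s, hs, he⟩ := pR_surj h0 h1 h'
  exact pR_ne hs.1 (by linarith [hs.2]) he

lemma pR'_neg {t : ℝ} (h0 : 0 < t) (h1 : t < ϖ₀ / 2) : pR' t < 0 := by
  have hp := ϖ₀_pos
  have hm : StrictMonoOn pR' (Set.Icc t (ϖ₀ / 2)) := by
    apply strictMonoOn_of_deriv_pos (convex_Icc _ _)
    · exact fun s hs => (pR'_deriv (by linarith [hs.1])
        (by linarith [hs.2])).continuousAt.continuousWithinAt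
    · intro s hs
      rw [interior_Icc] at hs
      have a : 0 < s := by linarith [hs.1]
      have b : s < ϖ₀ := by linarith [hs.2]
      rw [(pR'_deriv a b).deriv]
      have := pR_pos a b
      positivity
  have := hm (Set.left_mem_Icc.2 h1.le) (Set.right_mem_Icc.2 h1.le) h1
  rwa [pR'_half] at this

lemma pR_anti {z : ℝ} (h1 : z ≤ ϖ₀ / 2) : StrictAntiOn pR (Set.Ioc 0 z) := by
  have hp := ϖ₀_pos
  apply strictAntiOn_of_deriv_neg (convex_Ioc _ _)
  · exact fun s hs => (pR_deriv hs.1 (by linarith [hs.2])).continuousAt.continuousWithinAt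
  · intro s hs
    rw [interior_Ioc] at hs
    rw [(pR_deriv hs.1 (by linarith [hs.2])).deriv]
    exact pR'_neg hs.1 (by linarith [hs.2])

open MeasureTheory Set in
lemma pR_integral {z : ℝ} (h0 : 0 < z) (h1 : z ≤ ϖ₀ / 2) :
    ∫ x in Ioi (pR z), 1 / √(4 * x^3 - gR) = z := by
  have hp := ϖ₀_pos
  have hlt : z < ϖ₀ := by linarith
  have hanti := pR_anti h1
  have himg : pR '' Ioo 0 z = Ioi (pR z) := by
    ext x
    constructor
    · rintro ⟨t, ht, rfl⟩
      exact hanti (Ioo_subset_Ioc_self ht) (right_mem_Ioc.2 h0) ht.2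
    · intro hx
      exact pR_surj h0 hlt hx
  rw [← himg, integral_image_eq_integral_abs_deriv_smul (f' := pR') measurableSet_Ioo
    (fun t ht => (pR_deriv ht.1 (ht.2.trans hlt)).hasDerivWithinAt)
    ((hanti.mono Ioo_subset_Ioc_self).injOn)]
  have : ∫ t in Ioo 0 z, |pR' t| • (1 / √(4 * pR t^3 - gR)) = ∫ t in Ioo 0 z, (1:ℝ) := by
    refine setIntegral_congr_fun measurableSet_Ioo fun t ht => ?_
    have hneg := pR'_neg ht.1 (lt_of_lt_of_le ht.2 h1)
    simp only [smul_eq_mul]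
    rw [← pR_ode ht.1 (ht.2.trans hlt), Real.sqrt_sq_eq_abs]
    have := abs_pos.2 hneg.ne
    field_simp
  rw [this]
  simp [h0.le]

open MeasureTheory Set in
lemma scale_integral {e : ℝ} (he : 0 < e) :
    ∫ x in Ioi e, 1 / √(4 * x^3 - 4 * e^3) = (∫ y in Ioi (1:ℝ), 1 / √(y^3 - 1)) / (2 * √e) := by
  have h := integral_comp_mul_left_Ioi (fun x : ℝ => 1 / √(4 * x^3 - 4 * e^3)) 1 he
  rw [mul_one, smul_eq_mul] at h
  have h2 : ∫ y in Ioi (1:ℝ), 1 / √(4 * (e * y)^3 - 4 * e^3) =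
      ∫ y in Ioi (1:ℝ), (1 / (2 * e * √e)) * (1 / √(y^3 - 1)) := by
    refine setIntegral_congr_fun measurableSet_Ioi fun y hy => ?_
    have : 4 * (e * y)^3 - 4 * e^3 = (2 * e)^2 * (e * (y^3 - 1)) := by ring
    rw [this, Real.sqrt_mul (by positivity), Real.sqrt_sq (by positivity), Real.sqrt_mul he.le]
    rw [one_div_mul_one_div, mul_assoc (2 * e)]
  rw [h2, integral_const_mul] at h
  have hs : 0 < √e := Real.sqrt_pos.2 he
  field_simp at h ⊢
  linarith

lemma half_val : 4 * pR (ϖ₀ / 2) ^ 3 = 1 ∧ gR = 1 := by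
  have hp := ϖ₀_pos
  have hh : ϖ₀ / 2 < ϖ₀ := by linarith
  set e := pR (ϖ₀ / 2) with he
  have hepos : 0 < e := pR_pos (by linarith) hh
  have hg : gR = 4 * e^3 := by
    have := pR_ode (by linarith) hh
    rw [pR'_half] at this
    linarith
  have hi := pR_integral (z := ϖ₀ / 2) (by linarith) le_rfl
  rw [hg, ← he, scale_integral hepos, J_val] at hi
  have hs : 0 < √e := Real.sqrt_pos.2 hepos
  have h5 : (2:ℝ)^(2/3:ℝ) * 2^(2/3:ℝ) * 2^(2/3:ℝ) = 4 := by
    rw [← Real.rpow_add (by norm_num), ← Real.rpow_add (by norm_num)]; norm_num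
  have h6 : (2:ℝ)^(2/3:ℝ) = 2 * √e := by
    field_simp at hi
    linarith
  rw [h6] at h5
  have h7 : √e^2 = e := Real.sq_sqrt hepos.le
  have h8 : √e^3 = 1/2 := by linarith
  have h9 : e^3 = 1/4 := by
    calc e^3 = (√e^2)^3 := by rw [h7]
      _ = (√e^3)^2 := by ring
      _ = 1/4 := by rw [h8]; norm_num
  exact ⟨by linarith, by linarith⟩

/-- `℘(ϖ/3) = 1`; equivalently
`∫_1^∞ dx/√(4x³ − 1) = ϖ/3 = Γ(1/3)³/(6π)`. -/
theorem wp_at_third_of_period :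
    wp ((ϖ₀ : ℂ) / 3) = 1 ∧
    (∫ x in Set.Ioi (1 : ℝ), 1 / Real.sqrt (4 * x ^ 3 - 1)) = ϖ₀ / 3 ∧
    ϖ₀ / 3 = Real.Gamma (1 / 3) ^ 3 / (6 * Real.pi) := by
  refine ⟨?_, K_val, by rw [ϖ₀]; field_simp; norm_num⟩
  have hp := ϖ₀_pos
  obtain ⟨he, hg⟩ := half_val
  have hlt : pR (ϖ₀ / 2) < 1 := by
    by_contra h
    push Not at h
    have : 1 ≤ pR (ϖ₀ / 2) ^ 3 := one_le_pow₀ h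
    linarith
  obtain ⟨t, ht, h1⟩ := pR_surj (by linarith) (by linarith) hlt
  have hi := pR_integral ht.1 ht.2.le
  rw [h1, hg, K_val] at hi
  have : ((ϖ₀ : ℂ) / 3) = ((ϖ₀ / 3 : ℝ) : ℂ) := by push_cast; rfl
  rw [this, hi, wp_eq, pR_eq, h1]
  simp
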